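/- Let d ≥ 1 and let x_1, …, x_N (N ≥ 1) be pairwise distinct points in ℝ^d. Fix an index j' ∈ {1, …, N} and fix bandwidths σ_j > 0 for all j ≠ j'. Then the A-KDE total log-likelihood L(σ) = ∑_{i=1}^N log( (1/N) ∑_{j=1}^N K_{σ_j}(x_i, x_j) ), viewed as a function of σ_{j'} alone, tends to +∞ as σ_{j'} → 0 from the right (within (0, ∞)). -/

import Mathlib

/-- The isotropic Gaussian kernel on `ℝ^d` with center `μ` and bandwidth `σ`:
`K_σ(x, μ) = (2πσ²)^{-d/2} · exp(−‖x − μ‖² / (2σ²))`. -/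
noncomputable def gaussKernel (d : ℕ) (σ : ℝ) (x μ : EuclideanSpace ℝ (Fin d)) : ℝ :=
  (2 * Real.pi * σ ^ 2) ^ (-(d : ℝ) / 2) * Real.exp (-‖x - μ‖ ^ 2 / (2 * σ ^ 2))

/-!
Each data point lies at the centre of its own kernel, so keeping only the diagonal terms bounds the
log-likelihood from below by `∑ i, log (K_{σ i}(x i, x i) / N)`. As `σ j' → 0`, the summand `j'`
tends to `+∞` because `K_s(x, x) = (2πs²)^{-d/2}`, and the other summands do not move.
-/

open Filter Topology

section GaussKernel

variable {d : ℕ}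

theorem gaussKernel_nonneg (σ : ℝ) (x μ : EuclideanSpace ℝ (Fin d)) :
    0 ≤ gaussKernel d σ x μ := by
  unfold gaussKernel
  positivity

theorem gaussKernel_pos {σ : ℝ} (hσ : σ ≠ 0) (x μ : EuclideanSpace ℝ (Fin d)) :
    0 < gaussKernel d σ x μ := by
  unfold gaussKernel
  positivity

theorem gaussKernel_self (σ : ℝ) (x : EuclideanSpace ℝ (Fin d)) :
    gaussKernel d σ x x = (2 * Real.pi * σ ^ 2) ^ (-(d : ℝ) / 2) := by
  simp [gaussKernel]

theorem tendsto_gaussKernel_self_atTop (hd : 1 ≤ d) (x : EuclideanSpace ℝ (Fin d)) :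
    Tendsto (fun s => gaussKernel d s x x) (𝓝[≠] 0) atTop := by
  have exponent_neg : -(d : ℝ) / 2 < 0 := by
    have : (0 : ℝ) < d := by exact_mod_cast hd
    linarith
  have variance_tendsto : Tendsto (fun s : ℝ => 2 * Real.pi * s ^ 2) (𝓝[≠] 0) (𝓝[>] 0) := by
    refine tendsto_nhdsWithin_iff.2 ⟨?_, ?_⟩
    · exact (Continuous.tendsto' (by fun_prop) 0 0 (by simp)).mono_left nhdsWithin_le_nhds
    · filter_upwards [self_mem_nhdsWithin] with s (hs : s ≠ 0)
      exact Set.mem_Ioi.2 (by positivity)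
  simp only [gaussKernel_self]
  exact (tendsto_rpow_neg_nhdsGT_zero exponent_neg).comp variance_tendsto

end GaussKernel

section DiagonalBound

variable {ι : Type*} [Fintype ι]

theorem sum_log_mul_diag_le_sum_log_mul_sum {c : ℝ} (hc : 0 < c) {K : ι → ι → ℝ}
    (nonneg : ∀ i j, 0 ≤ K i j) (diag_pos : ∀ i, 0 < K i i) :
    ∑ i, Real.log (c * K i i) ≤ ∑ i, Real.log (c * ∑ j, K i j) := by
  refine Finset.sum_le_sum fun i _ => Real.log_le_log (mul_pos hc (diag_pos i)) ?_
  gcongr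
  exact Finset.single_le_sum (fun j _ => nonneg i j) (Finset.mem_univ i)

theorem tendsto_sum_apply_update_atTop [DecidableEq ι] {α β : Type*}
    [AddCommGroup β] [PartialOrder β] [IsOrderedAddMonoid β]
    {f : ι → α → β} {l : Filter α} {j : ι} (hf : Tendsto (f j) l atTop) (a : ι → α) :
    Tendsto (fun s => ∑ i, f i (Function.update a j s i)) l atTop := by
  have sum_split (s : α) : ∑ i, f i (Function.update a j s i) =
      f j s + ∑ i ∈ Finset.univ.erase j, f i (a i) := by
    rw [← Finset.add_sum_erase _ _ (Finset.mem_univ j), Function.update_self]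
    congr 1
    refine Finset.sum_congr rfl fun i hi => ?_
    rw [Function.update_of_ne (Finset.ne_of_mem_erase hi)]
  simp only [sum_split]
  exact tendsto_atTop_add_const_right l _ hf

end DiagonalBound

section LogLikelihood

variable {ι : Type*} [Fintype ι] {d : ℕ}

/-- The A-KDE total log-likelihood `L(σ)` of the data `x`, as a function of the bandwidths `σ`;
the `N` data points are indexed by an arbitrary finite type. -/
noncomputable def akdeLogLikelihood (x : ι → EuclideanSpace ℝ (Fin d)) (σ : ι → ℝ) : ℝ :=
  ∑ i, Real.log (1 / (Fintype.card ι : ℝ) * ∑ j, gaussKernel d (σ j) (x i) (x j))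

theorem sum_log_gaussKernel_self_le_akdeLogLikelihood [Nonempty ι]
    (x : ι → EuclideanSpace ℝ (Fin d)) {σ : ι → ℝ} (hσ : ∀ i, σ i ≠ 0) :
    ∑ i, Real.log (1 / (Fintype.card ι : ℝ) * gaussKernel d (σ i) (x i) (x i)) ≤
      akdeLogLikelihood x σ :=
  sum_log_mul_diag_le_sum_log_mul_sum (K := fun i j => gaussKernel d (σ j) (x i) (x j))
    (by positivity) (fun _ _ => gaussKernel_nonneg _ _ _) (fun i => gaussKernel_pos (hσ i) _ _)

theorem akde_mll_tendsto_atTop_of_bandwidth_collapse_general [DecidableEq ι] (hd : 1 ≤ d)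
    (x : ι → EuclideanSpace ℝ (Fin d)) (j' : ι) {σ : ι → ℝ} (hσ : ∀ j, j ≠ j' → σ j ≠ 0) :
    Tendsto (fun s => akdeLogLikelihood x (Function.update σ j' s)) (𝓝[≠] 0) atTop := by
  have : Nonempty ι := ⟨j'⟩
  have own_term_tendsto : Tendsto
      (fun s => Real.log (1 / (Fintype.card ι : ℝ) * gaussKernel d s (x j') (x j')))
      (𝓝[≠] 0) atTop :=
    Real.tendsto_log_atTop.comp
      ((tendsto_gaussKernel_self_atTop hd (x j')).const_mul_atTop (by positivity))
  refine tendsto_atTop_mono' _ ?_ (tendsto_sum_apply_update_atTop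
    (f := fun i s => Real.log (1 / (Fintype.card ι : ℝ) * gaussKernel d s (x i) (x i)))
    own_term_tendsto σ)
  filter_upwards [self_mem_nhdsWithin] with s (hs : s ≠ 0)
  have update_ne_zero : ∀ i, Function.update σ j' s i ≠ 0 :=
    (Function.forall_update_iff σ fun _ b => b ≠ 0).2 ⟨hs, hσ⟩
  exact sum_log_gaussKernel_self_le_akdeLogLikelihood x update_ne_zero

end LogLikelihood

/-- If the data points are pairwise distinct and all bandwidths except the `j'`-th one are
fixed and positive, the A-KDE total log-likelihood tends to `+∞` as `σ_{j'} → 0⁺`. -/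
theorem akde_mll_tendsto_atTop_of_bandwidth_collapse
    (d N : ℕ) (hd : 1 ≤ d) (hN : 1 ≤ N)
    (x : Fin N → EuclideanSpace ℝ (Fin d)) (hx : Function.Injective x)
    (j' : Fin N) (σ : Fin N → ℝ) (hσ : ∀ j, j ≠ j' → 0 < σ j) :
    Filter.Tendsto
      (fun s : ℝ => ∑ i, Real.log ((1 / (N : ℝ)) *
        ∑ j, gaussKernel d (if j = j' then s else σ j) (x i) (x j)))
      (nhdsWithin 0 (Set.Ioi 0)) Filter.atTop := by
  simpa only [akdeLogLikelihood, Function.update_apply, Fintype.card_fin] using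
    (akde_mll_tendsto_atTop_of_bandwidth_collapse_general hd x j'
      fun j hj => (hσ j hj).ne').mono_left (nhdsGT_le_nhdsNE 0)
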